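/- Let σ > 2cS. Suppose the 4-tuple N = (N₁,N₂,N₃,N₄) is continuous on 𝒫, possesses all first-order partial derivatives on the interior of 𝒫, and is a fixed point of the operator 𝒯^σ. Then N is a nonnegative classical solution of the problem Σ_{τ,τ'}. -/

import Mathlib

open Set MeasureTheory

noncomputable section

/-- The Broadwell collision term `Q(N) = 2cS (N₂N₃ - N₁N₄)` (indexing `N₁ = M 0`, …). -/
def QQ (c S : ℝ) (M : Fin 4 → ℝ → ℝ → ℝ → ℝ) (t x y : ℝ) : ℝ :=
  2 * c * S * (M 1 t x y * M 2 t x y - M 0 t x y * M 3 t x y)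

/-- Signs of `Q` in the four Broadwell equations. -/
def sgn4 : Fin 4 → ℝ := ![1, -1, -1, 1]

/-- `x`-components of the four velocities. -/
def spX (c : ℝ) : Fin 4 → ℝ := ![c, 0, 0, -c]

/-- `y`-components of the four velocities. -/
def spY (c : ℝ) : Fin 4 → ℝ := ![0, c, -c, 0]

/-- Partial derivative in `t`. -/
def pdtF (f : ℝ → ℝ → ℝ → ℝ) (t x y : ℝ) : ℝ := deriv (fun s => f s x y) t

/-- Partial derivative in `x`. -/
def pdxF (f : ℝ → ℝ → ℝ → ℝ) (t x y : ℝ) : ℝ := deriv (fun s => f t s y) x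

/-- Partial derivative in `y`. -/
def pdyF (f : ℝ → ℝ → ℝ → ℝ) (t x y : ℝ) : ℝ := deriv (fun s => f t x s) y

/-- `f` possesses all three first-order partial derivatives at `p`. -/
def HasPartials (f : ℝ → ℝ → ℝ → ℝ) (p : ℝ × ℝ × ℝ) : Prop :=
  DifferentiableAt ℝ (fun s => f s p.2.1 p.2.2) p.1 ∧
  DifferentiableAt ℝ (fun s => f p.1 s p.2.2) p.2.1 ∧
  DifferentiableAt ℝ (fun s => f p.1 p.2.1 s) p.2.2

/-- Continuity of a curried function of three real variables on a set. -/
def Cont3 (f : ℝ → ℝ → ℝ → ℝ) (D : Set (ℝ × ℝ × ℝ)) : Prop :=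
  ContinuousOn (fun p : ℝ × ℝ × ℝ => f p.1 p.2.1 p.2.2) D

/-- Sup norm over `D` of a function of three variables. -/
def supNorm3 (D : Set (ℝ × ℝ × ℝ)) (f : ℝ → ℝ → ℝ → ℝ) : ℝ :=
  sSup ((fun p : ℝ × ℝ × ℝ => |f p.1 p.2.1 p.2.2|) '' D)

/-- `‖N‖ = max_i ‖N_i‖_∞` over `D`. -/
def norm4 (D : Set (ℝ × ℝ × ℝ)) (M : Fin 4 → ℝ → ℝ → ℝ → ℝ) : ℝ :=
  max (max (supNorm3 D (M 0)) (supNorm3 D (M 1))) (max (supNorm3 D (M 2)) (supNorm3 D (M 3)))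

/-- Sup norm over `D` of a function of two variables. -/
def supNorm2 (D : Set (ℝ × ℝ)) (f : ℝ → ℝ → ℝ) : ℝ :=
  sSup ((fun p : ℝ × ℝ => |f p.1 p.2|) '' D)

/-- `‖g‖₁` for a function of two variables: max of the sup norms of `g` and its two
first-order partial derivatives over `D`. -/
def norm1Two (D : Set (ℝ × ℝ)) (f : ℝ → ℝ → ℝ) : ℝ :=
  max (supNorm2 D f)
    (max (supNorm2 D (fun a b => deriv (fun u => f u b) a))
      (supNorm2 D (fun a b => deriv (fun v => f a v) b)))

/-- The space-time slab `T × [a₁,b₁] × [a₂,b₂]`. -/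
def PsetT (T : Set ℝ) (a₁ b₁ a₂ b₂ : ℝ) : Set (ℝ × ℝ × ℝ) := T ×ˢ Icc a₁ b₁ ×ˢ Icc a₂ b₂

/-- The spatial rectangle `[a₁,b₁] × [a₂,b₂]`. -/
def Rect2 (a₁ b₁ a₂ b₂ : ℝ) : Set (ℝ × ℝ) := Icc a₁ b₁ ×ˢ Icc a₂ b₂

/-- A function of two variables which is continuous and bounded on `D` with continuous
and bounded first-order partial derivatives on `D`. -/
def Smooth2 (D : Set (ℝ × ℝ)) (f : ℝ → ℝ → ℝ) : Prop :=
  ContinuousOn (fun p : ℝ × ℝ => f p.1 p.2) D ∧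
  (∀ p ∈ D, DifferentiableAt ℝ (fun u => f u p.2) p.1 ∧
    DifferentiableAt ℝ (fun v => f p.1 v) p.2) ∧
  ContinuousOn (fun p : ℝ × ℝ => deriv (fun u => f u p.2) p.1) D ∧
  ContinuousOn (fun p : ℝ × ℝ => deriv (fun v => f p.1 v) p.2) D ∧
  ∃ C, ∀ p ∈ D, |f p.1 p.2| ≤ C ∧
    |deriv (fun u => f u p.2) p.1| ≤ C ∧ |deriv (fun v => f p.1 v) p.2| ≤ C

/-- Nonnegativity of a function of two variables on `D`. -/
def Nonneg2 (D : Set (ℝ × ℝ)) (f : ℝ → ℝ → ℝ) : Prop := ∀ p ∈ D, 0 ≤ f p.1 p.2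

/-- The initial data `N0` and boundary data `B1, B2, B3, B4` are nonnegative, continuous
and bounded with continuous bounded first-order partial derivatives, and satisfy the
compatibility conditions at time `t0`. -/
def NiceData (T : Set ℝ) (t0 a₁ b₁ a₂ b₂ : ℝ) (N0 : Fin 4 → ℝ → ℝ → ℝ)
    (B1 B2 B3 B4 : ℝ → ℝ → ℝ) : Prop :=
  (∀ i, Smooth2 (Rect2 a₁ b₁ a₂ b₂) (N0 i) ∧ Nonneg2 (Rect2 a₁ b₁ a₂ b₂) (N0 i)) ∧
  (Smooth2 (T ×ˢ Icc a₂ b₂) B1 ∧ Nonneg2 (T ×ˢ Icc a₂ b₂) B1) ∧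
  (Smooth2 (T ×ˢ Icc a₁ b₁) B2 ∧ Nonneg2 (T ×ˢ Icc a₁ b₁) B2) ∧
  (Smooth2 (T ×ˢ Icc a₁ b₁) B3 ∧ Nonneg2 (T ×ˢ Icc a₁ b₁) B3) ∧
  (Smooth2 (T ×ˢ Icc a₂ b₂) B4 ∧ Nonneg2 (T ×ˢ Icc a₂ b₂) B4) ∧
  (∀ y ∈ Icc a₂ b₂, N0 0 a₁ y = B1 t0 y) ∧
  (∀ x ∈ Icc a₁ b₁, N0 1 x a₂ = B2 t0 x) ∧
  (∀ x ∈ Icc a₁ b₁, N0 2 x b₂ = B3 t0 x) ∧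
  (∀ y ∈ Icc a₂ b₂, N0 3 b₁ y = B4 t0 y)

/-- `N` is a classical solution of the initial-boundary value problem for the planar
four-velocity Broadwell model on `T × [a₁,b₁] × [a₂,b₂]`, with initial time `t0`,
initial data `N0` and boundary data `B1, B2, B3, B4`. -/
def IsSol (c S : ℝ) (T : Set ℝ) (t0 a₁ b₁ a₂ b₂ : ℝ) (N0 : Fin 4 → ℝ → ℝ → ℝ)
    (B1 B2 B3 B4 : ℝ → ℝ → ℝ) (N : Fin 4 → ℝ → ℝ → ℝ → ℝ) : Prop :=
  (∀ i, Cont3 (N i) (PsetT T a₁ b₁ a₂ b₂)) ∧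
  (∀ i, ∀ p ∈ interior (PsetT T a₁ b₁ a₂ b₂), HasPartials (N i) p) ∧
  (∀ i, ∀ p ∈ interior (PsetT T a₁ b₁ a₂ b₂),
    pdtF (N i) p.1 p.2.1 p.2.2 + spX c i * pdxF (N i) p.1 p.2.1 p.2.2 +
      spY c i * pdyF (N i) p.1 p.2.1 p.2.2 = sgn4 i * QQ c S N p.1 p.2.1 p.2.2) ∧
  (∀ i, ∀ x ∈ Icc a₁ b₁, ∀ y ∈ Icc a₂ b₂, N i t0 x y = N0 i x y) ∧
  (∀ t ∈ T, ∀ y ∈ Icc a₂ b₂, N 0 t a₁ y = B1 t y) ∧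
  (∀ t ∈ T, ∀ x ∈ Icc a₁ b₁, N 1 t x a₂ = B2 t x) ∧
  (∀ t ∈ T, ∀ x ∈ Icc a₁ b₁, N 2 t x b₂ = B3 t x) ∧
  (∀ t ∈ T, ∀ y ∈ Icc a₂ b₂, N 3 t b₁ y = B4 t y)

/-- The operator `𝒯`, defined by integration along the characteristics. -/
def Tcal (c S τ a₁ b₁ a₂ b₂ : ℝ) (N0 : Fin 4 → ℝ → ℝ → ℝ) (B1 B2 B3 B4 : ℝ → ℝ → ℝ)
    (M : Fin 4 → ℝ → ℝ → ℝ → ℝ) : Fin 4 → ℝ → ℝ → ℝ → ℝ :=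
  ![fun t x y =>
      if a₁ ≤ x - c * (t - τ) then
        (∫ s in τ..t, QQ c S M s (x + c * (s - t)) y) + N0 0 (x - c * (t - τ)) y
      else
        (∫ s in (t - (x - a₁) / c)..t, QQ c S M s (x + c * (s - t)) y) +
          B1 (t - (x - a₁) / c) y,
    fun t x y =>
      if a₂ ≤ y - c * (t - τ) then
        (∫ s in τ..t, -QQ c S M s x (y + c * (s - t))) + N0 1 x (y - c * (t - τ))
      else
        (∫ s in (t - (y - a₂) / c)..t, -QQ c S M s x (y + c * (s - t))) +
          B2 (t - (y - a₂) / c) x,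
    fun t x y =>
      if y + c * (t - τ) ≤ b₂ then
        (∫ s in τ..t, -QQ c S M s x (y - c * (s - t))) + N0 2 x (y + c * (t - τ))
      else
        (∫ s in (t - (b₂ - y) / c)..t, -QQ c S M s x (y - c * (s - t))) +
          B3 (t - (b₂ - y) / c) x,
    fun t x y =>
      if x + c * (t - τ) ≤ b₁ then
        (∫ s in τ..t, QQ c S M s (x - c * (s - t)) y) + N0 3 (x + c * (t - τ)) y
      else
        (∫ s in (t - (b₁ - x) / c)..t, QQ c S M s (x - c * (s - t)) y) +
          B4 (t - (b₁ - x) / c) y]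

/-- `ρ(|M|) = |M₁| + |M₂| + |M₃| + |M₄|`. -/
def rhoA (M : Fin 4 → ℝ → ℝ → ℝ → ℝ) (t x y : ℝ) : ℝ :=
  |M 0 t x y| + |M 1 t x y| + |M 2 t x y| + |M 3 t x y|

/-- `Q(|M|)`. -/
def QQa (c S : ℝ) (M : Fin 4 → ℝ → ℝ → ℝ → ℝ) (t x y : ℝ) : ℝ :=
  2 * c * S * (|M 1 t x y| * |M 2 t x y| - |M 0 t x y| * |M 3 t x y|)

/-- `Q_i^σ(|M|) = σ ρ(|M|) |M_i| ± Q(|M|)`. -/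
def Qsig (c S σ : ℝ) (i : Fin 4) (M : Fin 4 → ℝ → ℝ → ℝ → ℝ) (t x y : ℝ) : ℝ :=
  σ * rhoA M t x y * |M i t x y| + sgn4 i * QQa c S M t x y

/-- Duhamel formula with integrating factor along the `i`-th characteristic, starting at
time `t0` with datum `datum`. -/
def duh (c S σ : ℝ) (i : Fin 4) (M : Fin 4 → ℝ → ℝ → ℝ → ℝ) (t0 t x y datum : ℝ) : ℝ :=
  ((∫ s in t0..t,
      Real.exp (σ * ∫ r in t0..s,
        rhoA M r (x + spX c i * (r - t)) (y + spY c i * (r - t))) *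
        Qsig c S σ i M s (x + spX c i * (s - t)) (y + spY c i * (s - t))) + datum) *
    Real.exp (-(σ * ∫ s in t0..t, rhoA M s (x + spX c i * (s - t)) (y + spY c i * (s - t))))

/-- The operator `𝒯^σ`. -/
def Tsig (c S σ τ a₁ b₁ a₂ b₂ : ℝ) (N0 : Fin 4 → ℝ → ℝ → ℝ) (B1 B2 B3 B4 : ℝ → ℝ → ℝ)
    (M : Fin 4 → ℝ → ℝ → ℝ → ℝ) : Fin 4 → ℝ → ℝ → ℝ → ℝ :=
  ![fun t x y =>
      if a₁ ≤ x - c * (t - τ) then duh c S σ 0 M τ t x y (N0 0 (x - c * (t - τ)) y)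
      else duh c S σ 0 M (t - (x - a₁) / c) t x y (B1 (t - (x - a₁) / c) y),
    fun t x y =>
      if a₂ ≤ y - c * (t - τ) then duh c S σ 1 M τ t x y (N0 1 x (y - c * (t - τ)))
      else duh c S σ 1 M (t - (y - a₂) / c) t x y (B2 (t - (y - a₂) / c) x),
    fun t x y =>
      if y + c * (t - τ) ≤ b₂ then duh c S σ 2 M τ t x y (N0 2 x (y + c * (t - τ)))
      else duh c S σ 2 M (t - (b₂ - y) / c) t x y (B3 (t - (b₂ - y) / c) x),
    fun t x y =>
      if x + c * (t - τ) ≤ b₁ then duh c S σ 3 M τ t x y (N0 3 (x + c * (t - τ)) y)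
      else duh c S σ 3 M (t - (b₁ - x) / c) t x y (B4 (t - (b₁ - x) / c) y)]

/-- Complement of the four exceptional planes. -/
def offPlanes (c τ a₁ b₁ a₂ b₂ : ℝ) : Set (ℝ × ℝ × ℝ) :=
  {p | p.2.1 - c * (p.1 - τ) ≠ a₁ ∧ p.2.2 - c * (p.1 - τ) ≠ a₂ ∧
    p.2.2 + c * (p.1 - τ) ≠ b₂ ∧ p.2.1 + c * (p.1 - τ) ≠ b₁}

/-- The interior of `𝒫` minus the four exceptional planes. -/
def Dset (c τ τ' a₁ b₁ a₂ b₂ : ℝ) : Set (ℝ × ℝ × ℝ) :=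
  (Ioo τ τ' ×ˢ Ioo a₁ b₁ ×ˢ Ioo a₂ b₂) ∩ offPlanes c τ a₁ b₁ a₂ b₂

/-- `u` has first-order partial derivatives on `D`, continuous and bounded there. -/
def DerivReg (D : Set (ℝ × ℝ × ℝ)) (u : ℝ → ℝ → ℝ → ℝ) : Prop :=
  (∀ p ∈ D, HasPartials u p) ∧
  Cont3 (pdtF u) D ∧ Cont3 (pdxF u) D ∧ Cont3 (pdyF u) D ∧
  ∃ C, ∀ p ∈ D, |pdtF u p.1 p.2.1 p.2.2| ≤ C ∧
    |pdxF u p.1 p.2.1 p.2.2| ≤ C ∧ |pdyF u p.1 p.2.1 p.2.2| ≤ C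

/-- Membership in the space `E`: continuity on `𝒫` plus regularity of the first-order
partial derivatives off the four exceptional planes. -/
def memE (c τ τ' a₁ b₁ a₂ b₂ : ℝ) (u : ℝ → ℝ → ℝ → ℝ) : Prop :=
  Cont3 u (PsetT (Icc τ τ') a₁ b₁ a₂ b₂) ∧ DerivReg (Dset c τ τ' a₁ b₁ a₂ b₂) u

/-- `‖u‖₁`: the max of the sup norm of `u` over `P` and of the sup norms of its
first-order partial derivatives over `D`. -/
def norm1E (P D : Set (ℝ × ℝ × ℝ)) (u : ℝ → ℝ → ℝ → ℝ) : ℝ :=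
  max (supNorm3 P u)
    (max (supNorm3 D (pdtF u)) (max (supNorm3 D (pdxF u)) (supNorm3 D (pdyF u))))

/-- `𝒩(N) = max_i ‖N_i‖₁`. -/
def NN4 (P D : Set (ℝ × ℝ × ℝ)) (N : Fin 4 → ℝ → ℝ → ℝ → ℝ) : ℝ :=
  max (max (norm1E P D (N 0)) (norm1E P D (N 1)))
    (max (norm1E P D (N 2)) (norm1E P D (N 3)))

/-- The convex set `𝓜_R = {N ∈ E⁴ : 𝒩(N) ≤ R}`. -/
def MR (c τ τ' a₁ b₁ a₂ b₂ R : ℝ) : Set (Fin 4 → ℝ → ℝ → ℝ → ℝ) :=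
  {N | (∀ i, memE c τ τ' a₁ b₁ a₂ b₂ (N i)) ∧
    NN4 (PsetT (Icc τ τ') a₁ b₁ a₂ b₂) (Dset c τ τ' a₁ b₁ a₂ b₂) N ≤ R}

/-- The transported initial datum `N̄_i^τ`. -/
def barN0 (c τ : ℝ) (N0 : Fin 4 → ℝ → ℝ → ℝ) (i : Fin 4) : ℝ → ℝ → ℝ → ℝ :=
  fun t x y => N0 i (x - spX c i * (t - τ)) (y - spY c i * (t - τ))

/-- The transported boundary data `N̄₁⁻, N̄₂⁻, N̄₃⁺, N̄₄⁺`. -/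
def barB (c a₁ b₁ a₂ b₂ : ℝ) (B1 B2 B3 B4 : ℝ → ℝ → ℝ) : Fin 4 → ℝ → ℝ → ℝ → ℝ :=
  ![fun t x y => B1 (t - (x - a₁) / c) y,
    fun t x y => B2 (t - (y - a₂) / c) x,
    fun t x y => B3 (t - (b₂ - y) / c) x,
    fun t x y => B4 (t - (b₁ - x) / c) y]

/-- Domain of definition of the transported initial datum `N̄_i^τ` inside `𝒫`. -/
def domBar0 (c τ a₁ b₁ a₂ b₂ : ℝ) (T : Set ℝ) (i : Fin 4) : Set (ℝ × ℝ × ℝ) :=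
  PsetT T a₁ b₁ a₂ b₂ ∩
    {p | (p.2.1 - spX c i * (p.1 - τ), p.2.2 - spY c i * (p.1 - τ)) ∈ Rect2 a₁ b₁ a₂ b₂}

/-- Domains of definition of the transported boundary data inside `𝒫`. -/
def domBarB (c a₁ b₁ a₂ b₂ : ℝ) (T : Set ℝ) : Fin 4 → Set (ℝ × ℝ × ℝ) :=
  ![PsetT T a₁ b₁ a₂ b₂ ∩ {p | p.1 - (p.2.1 - a₁) / c ∈ T},
    PsetT T a₁ b₁ a₂ b₂ ∩ {p | p.1 - (p.2.2 - a₂) / c ∈ T},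
    PsetT T a₁ b₁ a₂ b₂ ∩ {p | p.1 - (b₂ - p.2.2) / c ∈ T},
    PsetT T a₁ b₁ a₂ b₂ ∩ {p | p.1 - (b₁ - p.2.1) / c ∈ T}]

/-- `‖N̄_i^τ‖₁`. -/
def nb0 (c τ a₁ b₁ a₂ b₂ : ℝ) (T : Set ℝ) (N0 : Fin 4 → ℝ → ℝ → ℝ) (i : Fin 4) : ℝ :=
  norm1E (domBar0 c τ a₁ b₁ a₂ b₂ T i) (domBar0 c τ a₁ b₁ a₂ b₂ T i) (barN0 c τ N0 i)

/-- `‖N̄₁⁻‖₁`, `‖N̄₂⁻‖₁`, `‖N̄₃⁺‖₁`, `‖N̄₄⁺‖₁`. -/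
def nbB (c a₁ b₁ a₂ b₂ : ℝ) (T : Set ℝ) (B1 B2 B3 B4 : ℝ → ℝ → ℝ) (i : Fin 4) : ℝ :=
  norm1E (domBarB c a₁ b₁ a₂ b₂ T i) (domBarB c a₁ b₁ a₂ b₂ T i)
    (barB c a₁ b₁ a₂ b₂ B1 B2 B3 B4 i)

/-- `q`: the max of the `‖·‖₁` norms of the eight transported data functions. -/
def qval (c τ a₁ b₁ a₂ b₂ : ℝ) (T : Set ℝ) (N0 : Fin 4 → ℝ → ℝ → ℝ)
    (B1 B2 B3 B4 : ℝ → ℝ → ℝ) : ℝ :=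
  max
    (max (max (nb0 c τ a₁ b₁ a₂ b₂ T N0 0) (nb0 c τ a₁ b₁ a₂ b₂ T N0 1))
      (max (nb0 c τ a₁ b₁ a₂ b₂ T N0 2) (nb0 c τ a₁ b₁ a₂ b₂ T N0 3)))
    (max (max (nbB c a₁ b₁ a₂ b₂ T B1 B2 B3 B4 0) (nbB c a₁ b₁ a₂ b₂ T B1 B2 B3 B4 1))
      (max (nbB c a₁ b₁ a₂ b₂ T B1 B2 B3 B4 2) (nbB c a₁ b₁ a₂ b₂ T B1 B2 B3 B4 3)))

/-- `μ = 8 + 4/c + 8c`. -/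
def muc (c : ℝ) : ℝ := 8 + 4 / c + 8 * c

/-- `λ = 16 + 16c`. -/
def lamc (c : ℝ) : ℝ := 16 + 16 * c

/-- `δ = 4/c + 8 + 4c`. -/
def delc (c : ℝ) : ℝ := 4 / c + 8 + 4 * c

/-- `γ = 1 + c + 1/c`. -/
def gamc (c : ℝ) : ℝ := 1 + c + 1 / c

/-- `p_σ = (μ + λ σ R₀ (τ'-τ))(σ + cS)`. -/
def psig (c S σ R₀ τ τ' : ℝ) : ℝ := (muc c + lamc c * σ * R₀ * (τ' - τ)) * (σ + c * S)

/-- `q_σ = q (1 + δ σ R₀)`. -/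
def qsig (c σ R₀ q : ℝ) : ℝ := q * (1 + delc c * σ * R₀)

/-- `max_i ‖N_i‖₁` for a solution: sup norms of the `N_i` over `Dom`, and of their
first-order partial derivatives over the interior of `Dom`. -/
def NNSol (Dom : Set (ℝ × ℝ × ℝ)) (N : Fin 4 → ℝ → ℝ → ℝ → ℝ) : ℝ :=
  NN4 Dom (interior Dom) N


/-- Continuous extension of a function continuous on a segment. -/
theorem exists_cont_ext {a b : ℝ} (h : a ≤ b) {f : ℝ → ℝ} (hf : ContinuousOn f (Icc a b)) :
    ∃ g : ℝ → ℝ, Continuous g ∧ ∀ x ∈ Icc a b, f x = g x := by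
  refine ⟨IccExtend h ((Icc a b).domRestrict f), hf.domRestrict.Icc_extend', ?_⟩
  intro x hx
  rw [IccExtend_of_mem h _ hx]
  rfl

/-- The one-dimensional Duhamel formula. -/
def phiD (σ t0 d : ℝ) (ρ q : ℝ → ℝ) (s : ℝ) : ℝ :=
  ((∫ u in t0..s, Real.exp (σ * ∫ r in t0..u, ρ r) * q u) + d) *
    Real.exp (-(σ * ∫ u in t0..s, ρ u))

theorem phiD_congr {σ t0 d t1 : ℝ} {ρ q ρ' q' : ℝ → ℝ}
    (hρ : ∀ x ∈ Icc t0 t1, ρ x = ρ' x) (hq : ∀ x ∈ Icc t0 t1, q x = q' x)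
    {s : ℝ} (hs : s ∈ Icc t0 t1) : phiD σ t0 d ρ q s = phiD σ t0 d ρ' q' s := by
  have h1 : ∀ u ∈ Icc t0 t1, ∫ r in t0..u, ρ r = ∫ r in t0..u, ρ' r := by
    intro u hu
    apply intervalIntegral.integral_congr
    intro r hr
    rw [uIcc_of_le hu.1] at hr
    exact hρ r ⟨hr.1, hr.2.trans hu.2⟩
  unfold phiD
  rw [h1 s hs]
  congr 2
  apply intervalIntegral.integral_congr
  intro u hu
  rw [uIcc_of_le hs.1] at hu
  have hu' : u ∈ Icc t0 t1 := ⟨hu.1, hu.2.trans hs.2⟩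
  simp only [h1 u hu', hq u hu']

theorem phiD_hasDerivAt {σ t0 d t t1 : ℝ} {ρ q : ℝ → ℝ} (h0 : t0 < t) (h1 : t < t1)
    (hρ : ContinuousOn ρ (Icc t0 t1)) (hq : ContinuousOn q (Icc t0 t1)) :
    HasDerivAt (phiD σ t0 d ρ q) (q t - σ * ρ t * phiD σ t0 d ρ q t) t := by
  obtain ⟨ρ', hρc, hρe⟩ := exists_cont_ext (h0.trans h1).le hρ
  obtain ⟨q', hqc, hqe⟩ := exists_cont_ext (h0.trans h1).le hq
  have ht : t ∈ Icc t0 t1 := ⟨h0.le, h1.le⟩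
  rw [phiD_congr hρe hqe ht, hρe t ht, hqe t ht]
  have hR : ∀ u, HasDerivAt (fun u => ∫ r in t0..u, ρ' r) (ρ' u) u := fun u =>
    (hρc.integral_hasStrictDerivAt t0 u).hasDerivAt
  have hRc : Continuous (fun u => ∫ r in t0..u, ρ' r) :=
    continuous_iff_continuousAt.2 fun u => (hR u).continuousAt
  have hI : HasDerivAt (fun s => ∫ u in t0..s, Real.exp (σ * ∫ r in t0..u, ρ' r) * q' u)
      (Real.exp (σ * ∫ r in t0..t, ρ' r) * q' t) t := by
    have hcc : Continuous (fun u => Real.exp (σ * ∫ r in t0..u, ρ' r) * q' u) :=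
      (Real.continuous_exp.comp (continuous_const.mul hRc)).mul hqc
    exact (hcc.integral_hasStrictDerivAt t0 t).hasDerivAt
  have hE := (((hR t).const_mul σ).neg).exp
  have hP := (hI.add_const d).mul hE
  have key : HasDerivAt (phiD σ t0 d ρ' q') (q' t - σ * ρ' t * phiD σ t0 d ρ' q' t) t := by
    refine hP.congr_deriv ?_
    unfold phiD
    have : Real.exp (σ * ∫ r in t0..t, ρ' r) * Real.exp (-(σ * ∫ r in t0..t, ρ' r)) = 1 := by
      rw [← Real.exp_add]; simp
    simp only [Pi.neg_apply]
    linear_combination q' t * this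
  refine key.congr_of_eventuallyEq ?_
  filter_upwards [Icc_mem_nhds h0 h1] with s hs
  exact phiD_congr hρe hqe hs

/-- From the derivative along the characteristics to the partial derivative in time. -/
theorem time_deriv_of_char {f D : ℝ → ℝ → ℝ → ℝ} {vx vy t x y g : ℝ}
    (hD : ContinuousAt (fun p : ℝ × ℝ × ℝ => D p.1 p.2.1 p.2.2) (t, x, y))
    (hf : ∀ᶠ p : ℝ × ℝ × ℝ in nhds (t, x, y),
      HasDerivAt (fun s => f s (p.2.1 + vx * (s - p.1)) (p.2.2 + vy * (s - p.1)))
        (D p.1 p.2.1 p.2.2) p.1)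
    (hg : HasDerivAt (fun s => f t (x + vx * (t - s)) (y + vy * (t - s))) g t) :
    HasDerivAt (fun s => f s x y) (g + D t x y) t := by
  have hh : HasDerivAt (fun s => f s x y - f t (x + vx * (t - s)) (y + vy * (t - s)))
      (D t x y) t := by
    rw [hasDerivAt_iff_isLittleO, Asymptotics.isLittleO_iff]
    intro ε hε
    have hDε : ∀ᶠ p : ℝ × ℝ × ℝ in nhds (t, x, y), ‖D p.1 p.2.1 p.2.2 - D t x y‖ ≤ ε := by
      have := hD.eventually (Metric.closedBall_mem_nhds _ hε)
      filter_upwards [this] with p hp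
      simpa [dist_eq_norm] using hp
    have hmap : Filter.Tendsto (fun w : ℝ × ℝ => (w.1, x + vx * (w.1 - w.2), y + vy * (w.1 - w.2)))
        (nhds (t, t)) (nhds (t, x, y)) := by
      have : Continuous
          (fun w : ℝ × ℝ => (w.1, x + vx * (w.1 - w.2), y + vy * (w.1 - w.2))) := by fun_prop
      simpa using this.tendsto (t, t)
    have hev := hmap.eventually (hf.and hDε)
    obtain ⟨δ, hδ, hb⟩ := Metric.eventually_nhds_iff.1 hev
    filter_upwards [Metric.ball_mem_nhds t hδ] with s hs
    have hs' : |s - t| < δ := by simpa [Real.dist_eq] using hs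
    have hin : ∀ r ∈ uIcc t s, dist ((r, s) : ℝ × ℝ) (t, t) < δ := by
      intro r hr
      have : |r - t| ≤ |s - t| := abs_sub_left_of_mem_uIcc hr
      rw [Prod.dist_eq]
      simp only [Real.dist_eq]
      exact max_lt (this.trans_lt hs') hs'
    have hmv := Convex.norm_image_sub_le_of_norm_hasDerivWithin_le
      (f := fun r => f r (x + vx * (r - s)) (y + vy * (r - s)) - (r - t) * D t x y)
      (f' := fun r => D r (x + vx * (r - s)) (y + vy * (r - s)) - D t x y)
      (s := uIcc t s) (C := ε) (x := t) (y := s) ?_ ?_ (convex_uIcc t s)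
      left_mem_uIcc right_mem_uIcc
    · refine le_trans (le_of_eq ?_) hmv
      congr 1
      simp
      ring
    · intro r hr
      have h1 := (hb (hin r hr)).1
      simp only at h1
      have h2 : HasDerivAt (fun u => f u (x + vx * (u - s)) (y + vy * (u - s)))
          (D r (x + vx * (r - s)) (y + vy * (r - s))) r := by
        convert h1 using 3 <;> ring
      have h3 : HasDerivAt (fun u : ℝ => (u - t) * D t x y) (D t x y) r := by
        simpa using ((hasDerivAt_id r).sub_const t).mul_const (D t x y)
      exact (h2.sub h3).hasDerivWithinAt
    · intro r hr
      exact (hb (hin r hr)).2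
  have := hg.add hh
  refine this.congr_of_eventuallyEq (Filter.Eventually.of_forall fun s => ?_)
  simp

theorem Qsig_nonneg {c S σ : ℝ} (hc : 0 < c) (hS : 0 < S) (hσ : 2 * c * S < σ) (i : Fin 4)
    (M : Fin 4 → ℝ → ℝ → ℝ → ℝ) (t x y : ℝ) : 0 ≤ Qsig c S σ i M t x y := by
  have hk : 0 < 2 * c * S := by positivity
  unfold Qsig rhoA QQa
  generalize 2 * c * S = k at *
  have h0 := abs_nonneg (M 0 t x y)
  have h1 := abs_nonneg (M 1 t x y)
  have h2 := abs_nonneg (M 2 t x y)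
  have h3 := abs_nonneg (M 3 t x y)
  fin_cases i <;> simp only [sgn4, Fin.zero_eta, Fin.mk_one, Fin.reduceFinMk, Matrix.cons_val] <;>
  generalize |M 0 t x y| = m0 at * <;> generalize |M 1 t x y| = m1 at * <;>
  generalize |M 2 t x y| = m2 at * <;> generalize |M 3 t x y| = m3 at * <;>
  obtain ⟨e, he, rfl⟩ : ∃ e, 0 ≤ e ∧ σ = k + e := ⟨σ - k, by linarith, by ring⟩
  · have : 0 ≤ (k + e) * (m0 + m1 + m2) * m0 + e * m3 * m0 + k * (m1 * m2) := by positivity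
    linarith
  · have : 0 ≤ (k + e) * (m0 + m1 + m3) * m1 + e * m2 * m1 + k * (m0 * m3) := by positivity
    linarith
  · have : 0 ≤ (k + e) * (m0 + m2 + m3) * m2 + e * m1 * m2 + k * (m0 * m3) := by positivity
    linarith
  · have : 0 ≤ (k + e) * (m1 + m2 + m3) * m3 + e * m0 * m3 + k * (m1 * m2) := by positivity
    linarith

theorem duh_nonneg {c S σ : ℝ} (hc : 0 < c) (hS : 0 < S) (hσ : 2 * c * S < σ) (i : Fin 4)
    (M : Fin 4 → ℝ → ℝ → ℝ → ℝ) {t0 t x y d : ℝ} (h : t0 ≤ t) (hd : 0 ≤ d) :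
    0 ≤ duh c S σ i M t0 t x y d := by
  unfold duh
  refine mul_nonneg (add_nonneg ?_ hd) (Real.exp_pos _).le
  refine intervalIntegral.integral_nonneg h fun u _ => ?_
  exact mul_nonneg (Real.exp_pos _).le (Qsig_nonneg hc hS hσ i M _ _ _)

theorem duh_self (c S σ : ℝ) (i : Fin 4) (M : Fin 4 → ℝ → ℝ → ℝ → ℝ) (t x y d : ℝ) :
    duh c S σ i M t t x y d = d := by
  simp [duh]

/-- Along a characteristic, `duh` is the one-dimensional Duhamel formula. -/
theorem duh_char (c S σ : ℝ) (i : Fin 4) (M : Fin 4 → ℝ → ℝ → ℝ → ℝ) (t0 t x y d s : ℝ) :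
    duh c S σ i M t0 s (x + spX c i * (s - t)) (y + spY c i * (s - t)) d =
      phiD σ t0 d (fun r => rhoA M r (x + spX c i * (r - t)) (y + spY c i * (r - t)))
        (fun r => Qsig c S σ i M r (x + spX c i * (r - t)) (y + spY c i * (r - t))) s := by
  have hx : ∀ r, x + spX c i * (s - t) + spX c i * (r - s) = x + spX c i * (r - t) := by
    intro r; ring
  have hy : ∀ r, y + spY c i * (s - t) + spY c i * (r - s) = y + spY c i * (r - t) := by
    intro r; ring
  simp only [duh, phiD, hx, hy]

theorem interior_P (τ τ' a₁ b₁ a₂ b₂ : ℝ) : interior (PsetT (Icc τ τ') a₁ b₁ a₂ b₂) =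
    Ioo τ τ' ×ˢ Ioo a₁ b₁ ×ˢ Ioo a₂ b₂ := by
  simp only [PsetT, interior_prod_eq, interior_Icc]

/-- Derivative of a nonnegative fixed point along a characteristic. -/
theorem char_deriv {c S σ : ℝ} {P : Set (ℝ × ℝ × ℝ)} {N : Fin 4 → ℝ → ℝ → ℝ → ℝ}
    (hcont : ∀ i, Cont3 (N i) P) (hnn : ∀ i : Fin 4, ∀ p ∈ P, 0 ≤ N i p.1 p.2.1 p.2.2)
    (i : Fin 4) {t0 t x y d : ℝ} (ht : t0 < t) (hp : (t, x, y) ∈ interior P)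
    (hseg : ∀ s ∈ Icc t0 t, (s, x + spX c i * (s - t), y + spY c i * (s - t)) ∈ P)
    (hN : ∀ s, (s, x + spX c i * (s - t), y + spY c i * (s - t)) ∈ P →
      N i s (x + spX c i * (s - t)) (y + spY c i * (s - t)) =
        duh c S σ i N t0 s (x + spX c i * (s - t)) (y + spY c i * (s - t)) d) :
    HasDerivAt (fun s => N i s (x + spX c i * (s - t)) (y + spY c i * (s - t)))
      (sgn4 i * QQ c S N t x y) t := by
  have hγ : Continuous (fun s : ℝ => (s, x + spX c i * (s - t), y + spY c i * (s - t))) := by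
    fun_prop
  have hPn : P ∈ nhds (t, x + spX c i * (t - t), y + spY c i * (t - t)) := by
    simpa using mem_interior_iff_mem_nhds.1 hp
  have hev : ∀ᶠ s in nhds t, (s, x + spX c i * (s - t), y + spY c i * (s - t)) ∈ P :=
    hγ.continuousAt.eventually hPn
  obtain ⟨δ, hδ, hball⟩ := Metric.eventually_nhds_iff.1 hev
  have ht1 : t < t + δ / 2 := by linarith
  have hseg' : ∀ s ∈ Icc t0 (t + δ / 2),
      (s, x + spX c i * (s - t), y + spY c i * (s - t)) ∈ P := by
    intro s hs
    rcases le_total s t with h | h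
    · exact hseg s ⟨hs.1, h⟩
    · apply hball
      rw [Real.dist_eq, abs_of_nonneg (by linarith)]
      linarith [hs.2]
  have hNc : ∀ j, ContinuousOn (fun s => N j s (x + spX c i * (s - t)) (y + spY c i * (s - t)))
      (Icc t0 (t + δ / 2)) := fun j =>
    ContinuousOn.comp (t := P) (hcont j) hγ.continuousOn hseg'
  have hρ : ContinuousOn (fun r => rhoA N r (x + spX c i * (r - t)) (y + spY c i * (r - t)))
      (Icc t0 (t + δ / 2)) := by
    unfold rhoA
    exact (((hNc 0).abs.add (hNc 1).abs).add (hNc 2).abs).add (hNc 3).abs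
  have hQ : ContinuousOn (fun r => Qsig c S σ i N r (x + spX c i * (r - t))
      (y + spY c i * (r - t))) (Icc t0 (t + δ / 2)) := by
    unfold Qsig QQa
    exact ((continuousOn_const.mul hρ).mul (hNc i).abs).add (continuousOn_const.mul
      (continuousOn_const.mul (((hNc 1).abs.mul (hNc 2).abs).sub ((hNc 0).abs.mul (hNc 3).abs))))
  have hder := phiD_hasDerivAt (σ := σ) (d := d) ht ht1 hρ hQ
  have heq : ∀ s, (s, x + spX c i * (s - t), y + spY c i * (s - t)) ∈ P →
      N i s (x + spX c i * (s - t)) (y + spY c i * (s - t)) = _ := fun s hs =>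
    (hN s hs).trans (duh_char c S σ i N t0 t x y d s)
  have hfin := hder.congr_of_eventuallyEq (hev.mono heq)
  refine hfin.congr_deriv ?_
  rw [← heq t (hseg t ⟨ht.le, le_rfl⟩)]
  have hpP := interior_subset hp
  have habs : ∀ j, |N j t x y| = N j t x y := fun j => abs_of_nonneg (hnn j _ hpP)
  simp only [sub_self, mul_zero, add_zero, Qsig, QQa, QQ, habs]
  ring

/-- A fixed point of `𝒯^σ` (for `σ > 2cS`) is a nonnegative classical solution of
`Σ_(τ,τ')` (Proposition 1). -/
theorem fixedPoint_Tsig_isSolution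
    (c S σ τ τ' a₁ b₁ a₂ b₂ : ℝ) (hc : 0 < c) (hS : 0 < S) (hσ : 2 * c * S < σ)
    (hτ : τ < τ') (ha : a₁ < b₁) (hb : a₂ < b₂)
    (N0 : Fin 4 → ℝ → ℝ → ℝ) (B1 B2 B3 B4 : ℝ → ℝ → ℝ)
    (hdata : NiceData (Icc τ τ') τ a₁ b₁ a₂ b₂ N0 B1 B2 B3 B4)
    (N : Fin 4 → ℝ → ℝ → ℝ → ℝ)
    (hcont : ∀ i, Cont3 (N i) (PsetT (Icc τ τ') a₁ b₁ a₂ b₂))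
    (hdiff : ∀ i, ∀ p ∈ interior (PsetT (Icc τ τ') a₁ b₁ a₂ b₂), HasPartials (N i) p)
    (hfix : ∀ i : Fin 4, ∀ p ∈ PsetT (Icc τ τ') a₁ b₁ a₂ b₂,
      Tsig c S σ τ a₁ b₁ a₂ b₂ N0 B1 B2 B3 B4 N i p.1 p.2.1 p.2.2 = N i p.1 p.2.1 p.2.2) :
    IsSol c S (Icc τ τ') τ a₁ b₁ a₂ b₂ N0 B1 B2 B3 B4 N ∧
    ∀ i : Fin 4, ∀ p ∈ PsetT (Icc τ τ') a₁ b₁ a₂ b₂, 0 ≤ N i p.1 p.2.1 p.2.2 := by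
  obtain ⟨h0, ⟨-, hB1⟩, ⟨-, hB2⟩, ⟨-, hB3⟩, ⟨-, hB4⟩, hc1, hc2, hc3, hc4⟩ := hdata
  have hN0 : ∀ i x y, x ∈ Icc a₁ b₁ → y ∈ Icc a₂ b₂ → 0 ≤ N0 i x y := fun i x y hx hy =>
    (h0 i).2 (x, y) ⟨hx, hy⟩
  have hb1 : ∀ t y, t ∈ Icc τ τ' → y ∈ Icc a₂ b₂ → 0 ≤ B1 t y := fun t y ht hy =>
    hB1 (t, y) ⟨ht, hy⟩
  have hb2 : ∀ t y, t ∈ Icc τ τ' → y ∈ Icc a₁ b₁ → 0 ≤ B2 t y := fun t y ht hy =>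
    hB2 (t, y) ⟨ht, hy⟩
  have hb3 : ∀ t y, t ∈ Icc τ τ' → y ∈ Icc a₁ b₁ → 0 ≤ B3 t y := fun t y ht hy =>
    hB3 (t, y) ⟨ht, hy⟩
  have hb4 : ∀ t y, t ∈ Icc τ τ' → y ∈ Icc a₂ b₂ → 0 ≤ B4 t y := fun t y ht hy =>
    hB4 (t, y) ⟨ht, hy⟩
  have hf0 : ∀ t x y, (t, x, y) ∈ PsetT (Icc τ τ') a₁ b₁ a₂ b₂ → N 0 t x y =
      if a₁ ≤ x - c * (t - τ) then duh c S σ 0 N τ t x y (N0 0 (x - c * (t - τ)) y)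
      else duh c S σ 0 N (t - (x - a₁) / c) t x y (B1 (t - (x - a₁) / c) y) :=
    fun t x y hp => (hfix 0 (t, x, y) hp).symm
  have hf1 : ∀ t x y, (t, x, y) ∈ PsetT (Icc τ τ') a₁ b₁ a₂ b₂ → N 1 t x y =
      if a₂ ≤ y - c * (t - τ) then duh c S σ 1 N τ t x y (N0 1 x (y - c * (t - τ)))
      else duh c S σ 1 N (t - (y - a₂) / c) t x y (B2 (t - (y - a₂) / c) x) :=
    fun t x y hp => (hfix 1 (t, x, y) hp).symm
  have hf2 : ∀ t x y, (t, x, y) ∈ PsetT (Icc τ τ') a₁ b₁ a₂ b₂ → N 2 t x y =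
      if y + c * (t - τ) ≤ b₂ then duh c S σ 2 N τ t x y (N0 2 x (y + c * (t - τ)))
      else duh c S σ 2 N (t - (b₂ - y) / c) t x y (B3 (t - (b₂ - y) / c) x) :=
    fun t x y hp => (hfix 2 (t, x, y) hp).symm
  have hf3 : ∀ t x y, (t, x, y) ∈ PsetT (Icc τ τ') a₁ b₁ a₂ b₂ → N 3 t x y =
      if x + c * (t - τ) ≤ b₁ then duh c S σ 3 N τ t x y (N0 3 (x + c * (t - τ)) y)
      else duh c S σ 3 N (t - (b₁ - x) / c) t x y (B4 (t - (b₁ - x) / c) y) :=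
    fun t x y hp => (hfix 3 (t, x, y) hp).symm
  clear hfix
  -- elementary facts on the exit time
  have hexit : ∀ t w, 0 ≤ w → t - w / c ≤ t := fun t w hw => by
    have := div_nonneg hw hc.le
    linarith
  have hexit1 : ∀ t w, 0 < w → t - w / c < t := fun t w hw => by
    have := div_pos hw hc
    linarith
  have hexit2 : ∀ t w, w < c * (t - τ) → τ < t - w / c := fun t w hw => by
    have : w / c < t - τ := by rw [div_lt_iff₀ hc]; linarith
    linarith
  have hexit3 : ∀ t w s, t - w / c ≤ s → c * (t - s) ≤ w := fun t w s hs => by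
    have : t - s ≤ w / c := by linarith
    rw [le_div_iff₀ hc] at this
    linarith
  -- nonnegativity
  have hnn : ∀ i : Fin 4, ∀ p ∈ PsetT (Icc τ τ') a₁ b₁ a₂ b₂, 0 ≤ N i p.1 p.2.1 p.2.2 := by
    rintro i ⟨t, x, y⟩ hp
    obtain ⟨⟨ht, ht'⟩, ⟨hx, hx'⟩, hy, hy'⟩ := id hp
    simp only at ht ht' hx hx' hy hy' ⊢
    have hct : 0 ≤ c * (t - τ) := mul_nonneg hc.le (by linarith)
    fin_cases i
    · change 0 ≤ N 0 t x y
      rw [hf0 t x y hp]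
      split_ifs with h
      · exact duh_nonneg hc hS hσ _ _ ht (hN0 _ _ _ ⟨h, by linarith⟩ ⟨hy, hy'⟩)
      · have e1 := hexit t (x - a₁) (by linarith)
        have e2 := hexit2 t (x - a₁) (by linarith)
        exact duh_nonneg hc hS hσ _ _ e1 (hb1 _ _ ⟨e2.le, by linarith⟩ ⟨hy, hy'⟩)
    · change 0 ≤ N 1 t x y
      rw [hf1 t x y hp]
      split_ifs with h
      · exact duh_nonneg hc hS hσ _ _ ht (hN0 _ _ _ ⟨hx, hx'⟩ ⟨h, by linarith⟩)
      · have e1 := hexit t (y - a₂) (by linarith)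
        have e2 := hexit2 t (y - a₂) (by linarith)
        exact duh_nonneg hc hS hσ _ _ e1 (hb2 _ _ ⟨e2.le, by linarith⟩ ⟨hx, hx'⟩)
    · change 0 ≤ N 2 t x y
      rw [hf2 t x y hp]
      split_ifs with h
      · exact duh_nonneg hc hS hσ _ _ ht (hN0 _ _ _ ⟨hx, hx'⟩ ⟨by linarith, h⟩)
      · have e1 := hexit t (b₂ - y) (by linarith)
        have e2 := hexit2 t (b₂ - y) (by linarith)
        exact duh_nonneg hc hS hσ _ _ e1 (hb3 _ _ ⟨e2.le, by linarith⟩ ⟨hx, hx'⟩)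
    · change 0 ≤ N 3 t x y
      rw [hf3 t x y hp]
      split_ifs with h
      · exact duh_nonneg hc hS hσ _ _ ht (hN0 _ _ _ ⟨by linarith, h⟩ ⟨hy, hy'⟩)
      · have e1 := hexit t (b₁ - x) (by linarith)
        have e2 := hexit2 t (b₁ - x) (by linarith)
        exact duh_nonneg hc hS hσ _ _ e1 (hb4 _ _ ⟨e2.le, by linarith⟩ ⟨hy, hy'⟩)
  have hchar : ∀ i : Fin 4, ∀ p ∈ interior (PsetT (Icc τ τ') a₁ b₁ a₂ b₂),
      HasDerivAt (fun s => N i s (p.2.1 + spX c i * (s - p.1)) (p.2.2 + spY c i * (s - p.1)))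
        (sgn4 i * QQ c S N p.1 p.2.1 p.2.2) p.1 := by
    rintro i ⟨t, x, y⟩ hp
    have hp' := hp
    rw [interior_P] at hp'
    obtain ⟨⟨ht, ht'⟩, ⟨hx, hx'⟩, hy, hy'⟩ := hp'
    simp only at ht ht' hx hx' hy hy' ⊢
    have hmul : ∀ {u v : ℝ}, u ≤ v → 0 ≤ c * (v - u) := fun h => mul_nonneg hc.le (by linarith)
    fin_cases i
    · change HasDerivAt (fun s => N 0 s (x + spX c 0 * (s - t)) (y + spY c 0 * (s - t)))
        (sgn4 0 * QQ c S N t x y) t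
      have ex : spX c 0 = c := rfl
      have ey : spY c 0 = 0 := rfl
      by_cases h : a₁ ≤ x - c * (t - τ)
      · refine char_deriv (σ := σ) (t0 := τ) (d := N0 0 (x - c * (t - τ)) y) hcont hnn 0 ht hp
          ?_ ?_
        · rintro s ⟨hs, hs'⟩
          have k1 := hmul hs
          have k2 := hmul hs'
          rw [ex, ey]
          refine ⟨⟨hs, by linarith⟩, ⟨?_, ?_⟩, ?_, ?_⟩ <;> simp only <;> linarith
        · intro s hs
          rw [hf0 _ _ _ hs]
          have e : x + spX c 0 * (s - t) - c * (s - τ) = x - c * (t - τ) := by rw [ex]; ring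
          rw [e, if_pos h, ey]
          simp
      · have e1 := hexit1 t (x - a₁) (by linarith)
        have e2 := hexit2 t (x - a₁) (by linarith)
        refine char_deriv (σ := σ) (d := B1 (t - (x - a₁) / c) y) hcont hnn 0 e1 hp ?_ ?_
        · rintro s ⟨hs, hs'⟩
          have k1 := hexit3 _ _ _ hs
          have k2 := hmul hs'
          rw [ex, ey]
          refine ⟨⟨by linarith, by linarith⟩, ⟨?_, ?_⟩, ?_, ?_⟩ <;> simp only <;> linarith
        · intro s hs
          rw [hf0 _ _ _ hs]
          have e : x + spX c 0 * (s - t) - c * (s - τ) = x - c * (t - τ) := by rw [ex]; ring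
          have e' : s - (x + spX c 0 * (s - t) - a₁) / c = t - (x - a₁) / c := by
            rw [ex]; field_simp; ring
          rw [e, if_neg h, e', ey]
          simp
    · change HasDerivAt (fun s => N 1 s (x + spX c 1 * (s - t)) (y + spY c 1 * (s - t)))
        (sgn4 1 * QQ c S N t x y) t
      have ex : spX c 1 = 0 := rfl
      have ey : spY c 1 = c := rfl
      by_cases h : a₂ ≤ y - c * (t - τ)
      · refine char_deriv (σ := σ) (t0 := τ) (d := N0 1 x (y - c * (t - τ))) hcont hnn 1 ht hp
          ?_ ?_
        · rintro s ⟨hs, hs'⟩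
          have k1 := hmul hs
          have k2 := hmul hs'
          rw [ex, ey]
          refine ⟨⟨hs, by linarith⟩, ⟨?_, ?_⟩, ?_, ?_⟩ <;> simp only <;> linarith
        · intro s hs
          rw [hf1 _ _ _ hs]
          have e : y + spY c 1 * (s - t) - c * (s - τ) = y - c * (t - τ) := by rw [ey]; ring
          rw [e, if_pos h, ex]
          simp
      · have e1 := hexit1 t (y - a₂) (by linarith)
        have e2 := hexit2 t (y - a₂) (by linarith)
        refine char_deriv (σ := σ) (d := B2 (t - (y - a₂) / c) x) hcont hnn 1 e1 hp ?_ ?_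
        · rintro s ⟨hs, hs'⟩
          have k1 := hexit3 _ _ _ hs
          have k2 := hmul hs'
          rw [ex, ey]
          refine ⟨⟨by linarith, by linarith⟩, ⟨?_, ?_⟩, ?_, ?_⟩ <;> simp only <;> linarith
        · intro s hs
          rw [hf1 _ _ _ hs]
          have e : y + spY c 1 * (s - t) - c * (s - τ) = y - c * (t - τ) := by rw [ey]; ring
          have e' : s - (y + spY c 1 * (s - t) - a₂) / c = t - (y - a₂) / c := by
            rw [ey]; field_simp; ring
          rw [e, if_neg h, e', ex]
          simp
    · change HasDerivAt (fun s => N 2 s (x + spX c 2 * (s - t)) (y + spY c 2 * (s - t)))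
        (sgn4 2 * QQ c S N t x y) t
      have ex : spX c 2 = 0 := rfl
      have ey : spY c 2 = -c := rfl
      by_cases h : y + c * (t - τ) ≤ b₂
      · refine char_deriv (σ := σ) (t0 := τ) (d := N0 2 x (y + c * (t - τ))) hcont hnn 2 ht hp
          ?_ ?_
        · rintro s ⟨hs, hs'⟩
          have k1 := hmul hs
          have k2 := hmul hs'
          rw [ex, ey]
          refine ⟨⟨hs, by linarith⟩, ⟨?_, ?_⟩, ?_, ?_⟩ <;> simp only <;> linarith
        · intro s hs
          rw [hf2 _ _ _ hs]
          have e : y + spY c 2 * (s - t) + c * (s - τ) = y + c * (t - τ) := by rw [ey]; ring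
          rw [e, if_pos h, ex]
          simp
      · have e1 := hexit1 t (b₂ - y) (by linarith)
        have e2 := hexit2 t (b₂ - y) (by linarith)
        refine char_deriv (σ := σ) (d := B3 (t - (b₂ - y) / c) x) hcont hnn 2 e1 hp ?_ ?_
        · rintro s ⟨hs, hs'⟩
          have k1 := hexit3 _ _ _ hs
          have k2 := hmul hs'
          rw [ex, ey]
          refine ⟨⟨by linarith, by linarith⟩, ⟨?_, ?_⟩, ?_, ?_⟩ <;> simp only <;> linarith
        · intro s hs
          rw [hf2 _ _ _ hs]
          have e : y + spY c 2 * (s - t) + c * (s - τ) = y + c * (t - τ) := by rw [ey]; ring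
          have e' : s - (b₂ - (y + spY c 2 * (s - t))) / c = t - (b₂ - y) / c := by
            rw [ey]; field_simp; ring
          rw [e, if_neg h, e', ex]
          simp
    · change HasDerivAt (fun s => N 3 s (x + spX c 3 * (s - t)) (y + spY c 3 * (s - t)))
        (sgn4 3 * QQ c S N t x y) t
      have ex : spX c 3 = -c := rfl
      have ey : spY c 3 = 0 := rfl
      by_cases h : x + c * (t - τ) ≤ b₁
      · refine char_deriv (σ := σ) (t0 := τ) (d := N0 3 (x + c * (t - τ)) y) hcont hnn 3 ht hp
          ?_ ?_
        · rintro s ⟨hs, hs'⟩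
          have k1 := hmul hs
          have k2 := hmul hs'
          rw [ex, ey]
          refine ⟨⟨hs, by linarith⟩, ⟨?_, ?_⟩, ?_, ?_⟩ <;> simp only <;> linarith
        · intro s hs
          rw [hf3 _ _ _ hs]
          have e : x + spX c 3 * (s - t) + c * (s - τ) = x + c * (t - τ) := by rw [ex]; ring
          rw [e, if_pos h, ey]
          simp
      · have e1 := hexit1 t (b₁ - x) (by linarith)
        have e2 := hexit2 t (b₁ - x) (by linarith)
        refine char_deriv (σ := σ) (d := B4 (t - (b₁ - x) / c) y) hcont hnn 3 e1 hp ?_ ?_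
        · rintro s ⟨hs, hs'⟩
          have k1 := hexit3 _ _ _ hs
          have k2 := hmul hs'
          rw [ex, ey]
          refine ⟨⟨by linarith, by linarith⟩, ⟨?_, ?_⟩, ?_, ?_⟩ <;> simp only <;> linarith
        · intro s hs
          rw [hf3 _ _ _ hs]
          have e : x + spX c 3 * (s - t) + c * (s - τ) = x + c * (t - τ) := by rw [ex]; ring
          have e' : s - (b₁ - (x + spX c 3 * (s - t))) / c = t - (b₁ - x) / c := by
            rw [ex]; field_simp; ring
          rw [e, if_neg h, e', ey]
          simp
  refine ⟨⟨hcont, hdiff, ?_, ?_, ?_, ?_, ?_, ?_⟩, hnn⟩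
  · -- the equations
    rintro i ⟨t, x, y⟩ hp
    obtain ⟨-, hdx, hdy⟩ := hdiff i _ hp
    simp only at hdx hdy ⊢
    have hcn : ∀ j, ContinuousAt (fun p : ℝ × ℝ × ℝ => N j p.1 p.2.1 p.2.2) (t, x, y) := fun j =>
      ContinuousOn.continuousAt (hcont j) (mem_interior_iff_mem_nhds.1 hp)
    have hD : ContinuousAt (fun p : ℝ × ℝ × ℝ => sgn4 i * QQ c S N p.1 p.2.1 p.2.2)
        (t, x, y) := by
      unfold QQ
      exact continuousAt_const.mul (continuousAt_const.mul
        (((hcn 1).mul (hcn 2)).sub ((hcn 0).mul (hcn 3))))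
    have hg : HasDerivAt (fun s => N i t (x + spX c i * (t - s)) (y + spY c i * (t - s)))
        (-(spX c i) * pdxF (N i) t x y + -(spY c i) * pdyF (N i) t x y) t := by
      have hin : ∀ (v z : ℝ), HasDerivAt (fun s : ℝ => z + v * (t - s)) (-v) t := fun v z => by
        simpa using (((hasDerivAt_id t).const_sub t).const_mul v).const_add z
      have hX : ∀ v, HasDerivAt (fun s => N i t (x + v * (t - s)) y)
          (-v * pdxF (N i) t x y) t := fun v => by
        have h1 : HasDerivAt (fun s => N i t s y) (pdxF (N i) t x y) (x + v * (t - t)) := by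
          rw [sub_self, mul_zero, add_zero]
          exact hdx.hasDerivAt
        have := h1.comp t (hin v x)
        exact this.congr_deriv (mul_comm _ _)
      have hY : ∀ v, HasDerivAt (fun s => N i t x (y + v * (t - s)))
          (-v * pdyF (N i) t x y) t := fun v => by
        have h1 : HasDerivAt (fun s => N i t x s) (pdyF (N i) t x y) (y + v * (t - t)) := by
          rw [sub_self, mul_zero, add_zero]
          exact hdy.hasDerivAt
        have := h1.comp t (hin v y)
        exact this.congr_deriv (mul_comm _ _)
      have hz : spX c i = 0 ∨ spY c i = 0 := by
        fin_cases i <;> simp [spX, spY]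
      rcases hz with hz | hz
      · simpa [hz] using hY (spY c i)
      · simpa [hz] using hX (spX c i)
    have hfin := time_deriv_of_char (f := N i) (D := fun t x y => sgn4 i * QQ c S N t x y)
      (vx := spX c i) (vy := spY c i) hD
      (Filter.eventually_of_mem (isOpen_interior.mem_nhds hp) (hchar i)) hg
    have : pdtF (N i) t x y = _ := hfin.deriv
    rw [this]
    ring
  · -- initial data
    intro i x hx y hy
    have hp : (τ, x, y) ∈ PsetT (Icc τ τ') a₁ b₁ a₂ b₂ := ⟨⟨le_rfl, hτ.le⟩, hx, hy⟩
    fin_cases i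
    · change N 0 τ x y = N0 0 x y
      rw [hf0 _ _ _ hp, if_pos (by simpa using hx.1), duh_self]
      simp
    · change N 1 τ x y = N0 1 x y
      rw [hf1 _ _ _ hp, if_pos (by simpa using hy.1), duh_self]
      simp
    · change N 2 τ x y = N0 2 x y
      rw [hf2 _ _ _ hp, if_pos (by simpa using hy.2), duh_self]
      simp
    · change N 3 τ x y = N0 3 x y
      rw [hf3 _ _ _ hp, if_pos (by simpa using hx.2), duh_self]
      simp
  · intro t ht y hy
    rw [hf0 t a₁ y ⟨ht, ⟨le_rfl, ha.le⟩, hy⟩]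
    split_ifs with h
    · have : t = τ := le_antisymm (by nlinarith) ht.1
      subst this
      rw [duh_self, ← hc1 y hy]
      simp
    · simp [duh_self]
  · intro t ht x hx
    rw [hf1 t x a₂ ⟨ht, hx, ⟨le_rfl, hb.le⟩⟩]
    split_ifs with h
    · have : t = τ := le_antisymm (by nlinarith) ht.1
      subst this
      rw [duh_self, ← hc2 x hx]
      simp
    · simp [duh_self]
  · intro t ht x hx
    rw [hf2 t x b₂ ⟨ht, hx, ⟨hb.le, le_rfl⟩⟩]
    split_ifs with h
    · have : t = τ := le_antisymm (by nlinarith) ht.1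
      subst this
      rw [duh_self, ← hc3 x hx]
      simp
    · simp [duh_self]
  · intro t ht y hy
    rw [hf3 t b₁ y ⟨ht, ⟨ha.le, le_rfl⟩, hy⟩]
    split_ifs with h
    · have : t = τ := le_antisymm (by nlinarith) ht.1
      subst this
      rw [duh_self, ← hc4 y hy]
      simp
    · simp [duh_self]

end
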